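/- arXiv:1908.10839 — 2 statements merged into one kernel-verified Lean document; each statement's English description precedes it below -/
import Mathlib

section
/- Let φ_1,…,φ_λ and γ_1,…,γ_t be elements of F_{q^m} such that the λt products φ_ℓ·γ_r are linearly independent over F_q, and let E be the F_q-subspace of F_{q^m} spanned by γ_1,…,γ_t. Let H be an (n−k)×n matrix over F_{q^m} whose entries are h_{i,j} = Σ_{ℓ=1}^{λ} h_{i,j,ℓ} φ_ℓ with coefficients h_{i,j,ℓ} ∈ F_q, and suppose the λ(n−k) × n matrix H_ext over F_q obtained by vertically stacking the λ coefficient matrices (h_{i,j,ℓ})_{i,j} (ℓ = 1,…,λ) has rank n. Then the syndrome map e ↦ e·H^T is injective on the set of vectors e ∈ F_{q^m}^n all of whose entries lie in E; in particular, a vector with all entries in E is uniquely determined by its syndrome. -/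
open Matrix

/-!
Write `e j = ∑ r, C j r • γ r` with `C` over the base ring. Expanding the syndrome `H *ᵥ e` in the
independent family `φ ℓ * γ r` shows that its coordinates are exactly the entries of `Hext * C`.
Hence the syndrome determines `Hext * C`, and `Hext`, having independent columns, can be cancelled.
-/

section SyndromeDecoding

variable {R A ι κ Λ ρ : Type*} [CommSemiring R] [Fintype κ]

theorem linearIndependent_col_iff_rank_eq_card [Nontrivial R] [OrzechProperty R]
    {M : Matrix ι κ R} : LinearIndependent R M.col ↔ M.rank = Fintype.card κ := by
  rw [linearIndependent_iff_card_eq_finrank_span, Set.finrank, ← M.rank_eq_finrank_span_cols,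
    eq_comm]

variable [Semiring A] [Algebra R A] [Fintype Λ]
  {φ : Λ → A} {γ : ρ → A} {H : Matrix ι κ A} {Hext : Matrix (Λ × ι) κ R}

theorem mulVec_apply_eq_sum_stacked_mul [Fintype ρ]
    (hH : ∀ i j, H i j = ∑ ℓ, Hext (ℓ, i) j • φ ℓ) (C : Matrix κ ρ R) (i : ι) :
    (H *ᵥ fun j => ∑ r, C j r • γ r) i =
      ∑ p : Λ × ρ, (Hext * C) (p.1, i) p.2 • (φ p.1 * γ p.2) :=
  calc
    _ = ∑ j, ∑ p : Λ × ρ, (Hext (p.1, i) j * C j p.2) • (φ p.1 * γ p.2) := by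
      simp only [mulVec, dotProduct, hH, Finset.sum_mul_sum, smul_mul_smul_comm,
        Fintype.sum_prod_type]
    _ = _ := by
      rw [Finset.sum_comm]
      simp only [mul_apply, Finset.sum_smul]

theorem error_vector_unique_from_syndrome_general [Finite ρ]
    (hind : LinearIndependent R fun p : Λ × ρ => φ p.1 * γ p.2)
    (hH : ∀ i j, H i j = ∑ ℓ, Hext (ℓ, i) j • φ ℓ) (hcol : LinearIndependent R Hext.col) :
    Set.InjOn (H *ᵥ ·) {e | ∀ j, e j ∈ Submodule.span R (Set.range γ)} := by
  cases nonempty_fintype ρ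
  have exists_coordinates {e : κ → A} (he : ∀ j, e j ∈ Submodule.span R (Set.range γ)) :
      ∃ C : Matrix κ ρ R, (fun j => ∑ r, C j r • γ r) = e := by
    choose C hC using fun j => (Submodule.mem_span_range_iff_exists_fun R).1 (he j)
    exact ⟨C, funext hC⟩
  intro e he e' he' hs
  obtain ⟨C, rfl⟩ := exists_coordinates he
  obtain ⟨D, rfl⟩ := exists_coordinates he'
  have hmul : Hext * C = Hext * D := by
    ext ⟨ℓ, i⟩ r
    have hrow := congrFun hs i
    simp only [mulVec_apply_eq_sum_stacked_mul hH] at hrow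
    exact congrFun (hind.fintypeLinearCombination_injective hrow) (ℓ, r)
  have hCD : C = D :=
    ext_col fun r => mulVec_injective_iff.2 hcol (congrArg (col · r) hmul)
  rw [hCD]

end SyndromeDecoding

/-- If the `λt` products `φ_ℓ · γ_r` are linearly independent over `F_q`,
`E` is the span of `γ_1, …, γ_t`, the parity-check matrix `H` has entries
`h_{i,j} = ∑_ℓ h_{i,j,ℓ} φ_ℓ` with `h_{i,j,ℓ} ∈ F_q`, and the stacked coefficient
matrix `H_ext` over `F_q` has rank `n`, then the syndrome map `e ↦ e·Hᵀ` is injective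
on vectors all of whose entries lie in `E`. -/
theorem error_vector_unique_from_syndrome
    (q m lam t n k : ℕ) (Fq Fqm : Type*) [Field Fq] [Fintype Fq]
    (hq : Fintype.card Fq = q) [Field Fqm] [Algebra Fq Fqm]
    (hm : Module.finrank Fq Fqm = m)
    (φ : Fin lam → Fqm) (γ : Fin t → Fqm)
    (hind : LinearIndependent Fq (fun p : Fin lam × Fin t => φ p.1 * γ p.2))
    (H : Matrix (Fin (n - k)) (Fin n) Fqm)
    (hcoef : Fin (n - k) → Fin n → Fin lam → Fq)
    (hH : ∀ i j, H i j = ∑ ℓ : Fin lam, hcoef i j ℓ • φ ℓ)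
    (Hext : Matrix (Fin lam × Fin (n - k)) (Fin n) Fq)
    (hHext : ∀ ℓ i j, Hext (ℓ, i) j = hcoef i j ℓ)
    (hrank : Hext.rank = n)
    (e e' : Fin n → Fqm)
    (he : ∀ j, e j ∈ Submodule.span Fq (Set.range γ))
    (he' : ∀ j, e' j ∈ Submodule.span Fq (Set.range γ))
    (hs : Matrix.vecMul e Hᵀ = Matrix.vecMul e' Hᵀ) :
    e = e' := by
  rw [vecMul_transpose, vecMul_transpose] at hs
  have hcol : LinearIndependent Fq Hext.col :=
    linearIndependent_col_iff_rank_eq_card.2 (by rw [hrank, Fintype.card_fin])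
  exact error_vector_unique_from_syndrome_general hind (by simpa only [hHext]) hcol he he' hs
end

section
/- Let φ_1,…,φ_λ and γ_1,…,γ_t be elements of F_{q^m} such that the λt products φ_ℓ·γ_r are linearly independent over F_q, and let E be the F_q-subspace of F_{q^m} spanned by γ_1,…,γ_t. Let H be an (n−k)×n matrix over F_{q^m} whose entries are h_{i,j} = Σ_{ℓ=1}^{λ} h_{i,j,ℓ} φ_ℓ with coefficients h_{i,j,ℓ} ∈ F_q, and suppose the λ(n−k) × n matrix H_ext over F_q obtained by vertically stacking the λ coefficient matrices has rank n. Let C = {c ∈ F_{q^m}^n : c·H^T = 0} and let IC be the u-interleaved code {(c^(1),…,c^(u)) ∈ F_{q^m}^{un} : c^(w) ∈ C for all w}. If y ∈ F_{q^m}^{un} and c, c′ ∈ IC are such that every entry of y − c and every entry of y − c′ lies in E, then c = c′; i.e., the transmitted interleaved codeword is uniquely determined by the received word once the error support E is known. -/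
open Matrix

/-!
The difference of the two candidates is a word `e` of `C` with entries in `E`. Writing `e = a γ`
with a matrix `a` over the base ring, the syndrome `H e` has coordinates `H_ext a` with respect to
the independent products `φ_ℓ γ_r`. Hence `H_ext a = 0`, and the columns of `H_ext` are
independent, so `a = 0`.
-/

section LRPC

variable {K A ι m n τ : Type*}

/-- The matrix `H_ext` of an LRPC code: the coefficient matrices `(h i j ℓ)_{i,j}` stacked
vertically, row `(ℓ, i)` being row `i` of the `ℓ`-th coefficient matrix. -/
def extendedMatrix (h : m → n → ι → K) : Matrix (ι × m) n K :=
  .of fun p j => h p.2 j p.1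

/-- The parity-check matrix `H` of an LRPC code: its entries are the linear combinations of the
`φ ℓ` with coefficients `h i j ℓ`. -/
def parityCheckMatrix [Semiring K] [AddCommMonoid A] [Module K A] [Fintype ι] (φ : ι → A)
    (h : m → n → ι → K) : Matrix m n A :=
  .of fun i j => ∑ ℓ, h i j ℓ • φ ℓ

section Syndrome

variable [CommSemiring K] [NonUnitalNonAssocSemiring A] [Module K A] [IsScalarTower K A A]
  [SMulCommClass K A A] [Fintype ι] [Fintype τ]

theorem sum_smul_mul_sum_smul (a : ι → K) (b : τ → K) (φ : ι → A) (γ : τ → A) :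
    (∑ ℓ, a ℓ • φ ℓ) * ∑ r, b r • γ r =
      ∑ p : ι × τ, (a p.1 * b p.2) • (φ p.1 * γ p.2) := by
  simp_rw [Fintype.sum_mul_sum, Fintype.sum_prod_type, smul_mul_smul_comm]

theorem parityCheckMatrix_mulVec_sum_smul [Fintype n] (φ : ι → A) (γ : τ → A) (h : m → n → ι → K)
    (a : Matrix n τ K) (i : m) :
    (parityCheckMatrix φ h *ᵥ fun j => ∑ r, a j r • γ r) i =
      ∑ p : ι × τ, (extendedMatrix h * a) (p.1, i) p.2 • (φ p.1 * γ p.2) := by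
  calc (parityCheckMatrix φ h *ᵥ fun j => ∑ r, a j r • γ r) i
      = ∑ j, ∑ p : ι × τ, (h i j p.1 * a j p.2) • (φ p.1 * γ p.2) :=
        Finset.sum_congr rfl fun j _ => sum_smul_mul_sum_smul (h i j) (a j) φ γ
    _ = ∑ p : ι × τ, (∑ j, h i j p.1 * a j p.2) • (φ p.1 * γ p.2) := by
        simp_rw [Finset.sum_smul]
        exact Finset.sum_comm

end Syndrome

theorem linearIndependent_col_of_rank_eq_card [CommRing K] [Nontrivial K] [Fintype n]
    {M : Matrix m n K} (hM : M.rank = Fintype.card n) : LinearIndependent K M.col :=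
  linearIndependent_iff_card_eq_finrank_span.mpr (hM.symm.trans M.rank_eq_finrank_span_cols)

section Uniqueness

variable [CommRing K] [NonUnitalNonAssocRing A] [Module K A] [IsScalarTower K A A]
  [SMulCommClass K A A] [Fintype ι] [Fintype n] {φ : ι → A} {γ : τ → A} {h : m → n → ι → K}

theorem extendedMatrix_mul_eq_zero [Fintype τ]
    (hind : LinearIndependent K fun p : ι × τ => φ p.1 * γ p.2) {a : Matrix n τ K}
    (ha : (parityCheckMatrix φ h *ᵥ fun j => ∑ r, a j r • γ r) = 0) :
    extendedMatrix h * a = 0 := by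
  ext ⟨ℓ, i⟩ r
  have hsyndrome := congrFun ha i
  rw [parityCheckMatrix_mulVec_sum_smul] at hsyndrome
  exact Fintype.linearIndependent_iff.mp hind
    (fun p => (extendedMatrix h * a) (p.1, i) p.2) hsyndrome (ℓ, r)

theorem eq_zero_of_parityCheckMatrix_mulVec_eq_zero [Finite τ]
    (hind : LinearIndependent K fun p : ι × τ => φ p.1 * γ p.2)
    (hcol : LinearIndependent K (extendedMatrix h).col) {e : n → A}
    (he : ∀ j, e j ∈ Submodule.span K (Set.range γ))
    (hsyndrome : parityCheckMatrix φ h *ᵥ e = 0) : e = 0 := by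
  cases nonempty_fintype τ
  choose a ha using fun j => (Submodule.mem_span_range_iff_exists_fun K).mp (he j)
  obtain rfl : (fun j => ∑ r, a j r • γ r) = e := funext ha
  have hcols (r : τ) : (fun j => a j r) = 0 := by
    have hmul : extendedMatrix h *ᵥ (fun j => a j r) = 0 :=
      funext fun p => congrFun₂ (extendedMatrix_mul_eq_zero hind hsyndrome) p r
    exact mulVec_injective_iff.mpr hcol (hmul.trans (mulVec_zero _).symm)
  ext j
  exact Finset.sum_eq_zero fun r _ => by rw [congrFun (hcols r) j, Pi.zero_apply, zero_smul]

theorem interleaved_codeword_unique_from_support_general [Nontrivial K] [Finite τ] {υ : Type*}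
    (hind : LinearIndependent K fun p : ι × τ => φ p.1 * γ p.2)
    (hrank : (extendedMatrix h).rank = Fintype.card n) {y c c' : υ → n → A}
    (hc : ∀ w, parityCheckMatrix φ h *ᵥ c w = 0)
    (hc' : ∀ w, parityCheckMatrix φ h *ᵥ c' w = 0)
    (herr : ∀ w j, y w j - c w j ∈ Submodule.span K (Set.range γ))
    (herr' : ∀ w j, y w j - c' w j ∈ Submodule.span K (Set.range γ)) : c = c' := by
  ext1 w
  have hdiff : ∀ j, (c w - c' w) j ∈ Submodule.span K (Set.range γ) := fun j => by
    simpa only [Pi.sub_apply, sub_sub_sub_cancel_left] using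
      Submodule.sub_mem _ (herr' w j) (herr w j)
  have hsyndrome : parityCheckMatrix φ h *ᵥ (c w - c' w) = 0 := by
    rw [mulVec_sub, hc, hc', sub_zero]
  exact sub_eq_zero.mp <| eq_zero_of_parityCheckMatrix_mulVec_eq_zero hind
    (linearIndependent_col_of_rank_eq_card hrank) hdiff hsyndrome

end Uniqueness

end LRPC

/-- With the LRPC setup of Statement 5 (products `φ_ℓ γ_r` linearly
independent over `F_q`, `E = ⟨γ_1, …, γ_t⟩`, `H` with entries
`h_{i,j} = ∑_ℓ h_{i,j,ℓ} φ_ℓ`, and `H_ext` of rank `n`), let `C` be the code with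
parity-check matrix `H` and `IC` its `u`-interleaved code. If `y` is a received word
and `c, c'` are interleaved codewords such that all entries of `y − c` and of
`y − c'` lie in `E`, then `c = c'`: the interleaved codeword is uniquely determined
once the error support is known. -/
theorem interleaved_codeword_unique_from_support
    (q m lam t n k u : ℕ) (Fq Fqm : Type*) [Field Fq] [Fintype Fq]
    (hq : Fintype.card Fq = q) [Field Fqm] [Algebra Fq Fqm]
    (hm : Module.finrank Fq Fqm = m)
    (φ : Fin lam → Fqm) (γ : Fin t → Fqm)
    (hind : LinearIndependent Fq (fun p : Fin lam × Fin t => φ p.1 * γ p.2))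
    (H : Matrix (Fin (n - k)) (Fin n) Fqm)
    (hcoef : Fin (n - k) → Fin n → Fin lam → Fq)
    (hH : ∀ i j, H i j = ∑ ℓ : Fin lam, hcoef i j ℓ • φ ℓ)
    (Hext : Matrix (Fin lam × Fin (n - k)) (Fin n) Fq)
    (hHext : ∀ ℓ i j, Hext (ℓ, i) j = hcoef i j ℓ)
    (hrank : Hext.rank = n)
    (y c c' : Fin u → Fin n → Fqm)
    (hc : ∀ w, Matrix.vecMul (c w) Hᵀ = 0)
    (hc' : ∀ w, Matrix.vecMul (c' w) Hᵀ = 0)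
    (herr : ∀ w j, y w j - c w j ∈ Submodule.span Fq (Set.range γ))
    (herr' : ∀ w j, y w j - c' w j ∈ Submodule.span Fq (Set.range γ)) :
    c = c' := by
  obtain rfl : H = parityCheckMatrix φ hcoef := Matrix.ext hH
  obtain rfl : Hext = extendedMatrix hcoef := Matrix.ext fun p j => hHext p.1 p.2 j
  simp only [vecMul_transpose] at hc hc'
  exact interleaved_codeword_unique_from_support_general hind
    (hrank.trans (Fintype.card_fin n).symm) hc hc' herr herr'
end
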